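/- Let $a$, $b$, $c$ be coprime positive integers with $\min\{a,b,c\} > 1$ and $c$ odd. Then the equation $a^x + b^y = c^z$ has at most two solutions in positive integers $(x,y,z)$. -/

import Mathlib

/-- Pair of factors: the power 2k+1 of X√P + Y√(-Q) is X F √P + Y G √(-Q). -/
def FF (A B : ℤ) : ℕ → ℤ × ℤ
  | 0 => (1, 1)
  | k + 1 => ((A - B) * (FF A B k).1 - 2 * B * (FF A B k).2,
      (A - B) * (FF A B k).2 + 2 * A * (FF A B k).1)

lemma FF_succ1 (A B : ℤ) (k : ℕ) :
    (FF A B (k+1)).1 = (A - B) * (FF A B k).1 - 2 * B * (FF A B k).2 := rfl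
lemma FF_succ2 (A B : ℤ) (k : ℕ) :
    (FF A B (k+1)).2 = (A - B) * (FF A B k).2 + 2 * A * (FF A B k).1 := rfl

lemma FF_norm (A B : ℤ) (k : ℕ) :
    A * (FF A B k).1 ^ 2 + B * (FF A B k).2 ^ 2 = (A + B) ^ (2 * k + 1) := by
  induction k with
  | zero => simp [FF]
  | succ k ih =>
    rw [FF_succ1, FF_succ2]
    have : (A + B) ^ (2 * (k + 1) + 1) = (A + B) ^ 2 * (A + B) ^ (2 * k + 1) := by ring
    rw [this, ← ih]; ring

lemma FF_swap (A B : ℤ) (k : ℕ) :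
    (FF B A k).1 = (-1) ^ k * (FF A B k).2 ∧ (FF B A k).2 = (-1) ^ k * (FF A B k).1 := by
  induction k with
  | zero => simp [FF]
  | succ k ih =>
    simp only [FF_succ1, FF_succ2, ih.1, ih.2]
    constructor <;> ring

/-- congruences mod `B^2`. -/
lemma FF_modB (A B : ℤ) (k : ℕ) : ∃ C u v : ℤ,
    6 * C = (2 * k + 1) * (2 * k) * (2 * k - 1) ∧
    A * (FF A B k).1 = A ^ (k+1) - (2 * k + 1) * k * A ^ k * B + B ^ 2 * u ∧
    A * (FF A B k).2 = (2 * k + 1) * A ^ (k+1) - C * A ^ k * B + B ^ 2 * v := by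
  induction k with
  | zero => exact ⟨0, 0, 0, by simp, by simp [FF], by simp [FF]⟩
  | succ k ih =>
    obtain ⟨C, u, v, hC, h1, h2⟩ := ih
    refine ⟨C + (2 * k + 1) ^ 2, (A - B) * u + (2*k+1) * k * A ^ k + 2 * C * A ^ k - 2 * B * v,
      (A - B) * v + C * A ^ k + 2 * A * u, ?_, ?_, ?_⟩
    · push_cast; linear_combination hC
    · rw [FF_succ1]; push_cast
      linear_combination (A - B) * h1 - 2 * B * h2
    · rw [FF_succ2]; push_cast
      linear_combination (A - B) * h2 + 2 * A * h1

lemma FF_mod2 (A B : ℤ) (k : ℕ) : B ∣ (FF A B k).2 - (2 * k + 1) * A ^ k ∧ B ∣ (FF A B k).1 - A ^ k := by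
  induction k with
  | zero => simp [FF]
  | succ k ih =>
    obtain ⟨⟨u, hu⟩, ⟨v, hv⟩⟩ := ih
    rw [FF_succ1, FF_succ2]
    constructor
    · refine ⟨A * u - (FF A B k).2 + 2 * A * v, ?_⟩
      push_cast
      linear_combination A * hu + 2 * A * hv
    · refine ⟨A * v - (FF A B k).1 - 2 * (FF A B k).2, ?_⟩
      linear_combination A * hv

lemma half3 (a b c x y g Q j : ℕ) (Y A B : ℤ) (ha : 1 < a) (hb : 1 < b) (hc : 1 < c)
    (hA : 0 < A) (hB : 0 < B)
    (hQ : Q = 1 ∨ Q = b) (hBQ : B = Q * Y ^ 2)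
    (hsum : A + B = (c:ℤ) ^ g) (h3b : 3 ∣ b) (h3B : (3:ℤ) ∣ B) (hj : 1 ≤ j)
    (hF : A - 3 * B = 1 ∨ A - 3 * B = -1) (hF' : 3 * A - B = 3 ^ j)
    (hFA : A = (a:ℤ) ^ x) (hFB : B * (3 ^ j) ^ 2 = (b:ℤ) ^ y) :
    a = 10 ∧ b = 3 ∧ c = 13 ∧ x = 1 ∧ y = 7 := by
  obtain ⟨B', rfl⟩ := h3B
  have hB' : 0 < B' := by omega
  have hn9 : ¬ (3:ℤ) ∣ B' := by
    intro ⟨t, ht⟩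
    have : (3:ℤ)^j = 3 * 3^(j-1) := by rw [← pow_succ']; congr 1; omega
    rcases Nat.lt_or_ge j 2 with h | h
    · have : j = 1 := by omega
      subst this
      rcases hF with h | h <;> omega
    · have : (3:ℤ)^j = 9 * 3^(j-2) := by
        rw [show (9:ℤ) = 3^2 by norm_num, ← pow_add]; congr 1; omega
      rcases hF with h | h <;> omega
  have hQb : Q = b := by
    rcases hQ with h | h
    · subst h
      exfalso
      have h3 : (3:ℤ) ∣ Y := by
        have : (3:ℤ) ∣ Y^2 := ⟨B', by push_cast at hBQ; linarith⟩
        exact Int.Prime.dvd_pow' (by norm_num) this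
      obtain ⟨t, rfl⟩ := h3
      apply hn9
      exact ⟨t^2, by push_cast at hBQ; linarith⟩
    · exact h
  subst hQb
  obtain ⟨d, rfl⟩ := h3b
  have hd : ¬ 3 ∣ d := by
    intro ⟨t, ht⟩
    apply hn9
    refine ⟨t * Y^2, ?_⟩
    subst ht; push_cast at hBQ; linarith
  lift B' to ℕ using hB'.le with E
  have hn9' : ¬ 3 ∣ E := by exact_mod_cast hn9
  have hE : 3 ^ (2 * j + 1) * E = 3 ^ y * d ^ y := by
    have : (3 * E) * (3 ^ j) ^ 2 = (3 * d) ^ y := by exact_mod_cast hFB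
    rw [mul_pow] at this
    rw [← this]; ring
  have hy : y = 2 * j + 1 := by
    have h1 : padicValNat 3 (3 ^ (2 * j + 1) * E) = 2 * j + 1 := by
      have : Fact (Nat.Prime 3) := ⟨by norm_num⟩
      rw [padicValNat.mul (by positivity) (by omega), padicValNat.prime_pow,
        padicValNat.eq_zero_of_not_dvd hn9']
    have h2 : padicValNat 3 (3 ^ y * d ^ y) = y := by
      have : Fact (Nat.Prime 3) := ⟨by norm_num⟩
      have hd0 : d ≠ 0 := by rintro rfl; simp at hd
      rw [padicValNat.mul (by positivity) (by positivity), padicValNat.prime_pow,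
        padicValNat.eq_zero_of_not_dvd (fun h => hd (Nat.prime_three.dvd_of_dvd_pow h))]; rfl
    rw [← h2, ← hE, h1]
  have hEd : E = d ^ (2 * j + 1) := by
    subst hy
    exact Nat.eq_of_mul_eq_mul_left (by positivity) hE
  have hlt : (E:ℤ) < 3 ^ j := by
    rcases hF with h | h <;> omega
  have hd1 : d = 1 := by
    by_contra hne
    have hd2 : 2 ≤ d := by
      have : d ≠ 0 := by rintro rfl; simp at hd
      omega
    have h1 : 2 ^ (2 * j + 1) ≤ d ^ (2 * j + 1) := Nat.pow_le_pow_left hd2 _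
    have h2 : 3 ^ j ≤ 4 ^ j := Nat.pow_le_pow_left (by norm_num) _
    have h3 : 2 ^ (2 * j + 1) = 2 * 4 ^ j := by rw [pow_succ, pow_mul]; ring
    have h4 : E < 3 ^ j := by exact_mod_cast hlt
    have : 0 < 4 ^ j := by positivity
    omega
  subst hd1
  simp only [one_pow] at hEd
  subst hEd
  have hj3 : A = 10 ∧ j = 3 := by
    have hj4 : j < 4 := by
      by_contra h
      have : (3:ℤ)^4 ≤ 3^j := pow_le_pow_right₀ (by norm_num) (by omega)
      rcases hF with h | h <;> omega
    interval_cases j <;> rcases hF with h | h <;> omega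
  obtain ⟨rfl, rfl⟩ := hj3
  have hax : a ^ x = 10 := by exact_mod_cast hFA.symm
  have hcg : c ^ g = 13 := by
    have : (c:ℤ)^g = 13 := by rw [← hsum]; norm_num
    exact_mod_cast this
  have hx : x = 1 := by
    have : a ≤ 10 := by
      rw [← hax]; apply Nat.le_self_pow; rintro rfl; simp at hax
    have hx4 : x < 4 := by
      by_contra h
      have : 2 ^ 4 ≤ a ^ x := (Nat.pow_le_pow_left ha 4).trans (Nat.pow_le_pow_right (by omega) (by omega))
      omega
    interval_cases x
    · simp at hax
    · rfl
    · interval_cases a <;> omega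
    · interval_cases a <;> omega
  subst hx
  have hc13 : c = 13 := by
    have h1 : c ∣ 13 := by rw [← hcg]; apply dvd_pow_self; rintro rfl; simp at hcg
    exact ((Nat.dvd_prime (by norm_num)).1 h1).resolve_left (by omega)
  exact ⟨by simpa using hax, rfl, hc13, rfl, by omega⟩

lemma half (a b c x y g Q k : ℕ) (Y A B : ℤ) (ha : 1 < a) (hb : 1 < b) (hc : 1 < c)
    (hA : 0 < A) (hB : 0 < B) (hAB : IsCoprime A B) (hr : (2 * k + 1).Prime)
    (hQ : Q = 1 ∨ Q = b) (hBQ : B = Q * Y ^ 2)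
    (radb : ∀ q : ℕ, q.Prime → q ∣ b → (q:ℤ) ∣ B)
    (hsum : A + B = (c:ℤ) ^ g) (hF : (FF A B k).1 ^ 2 = 1)
    (hFA : A * (FF A B k).1 ^ 2 = (a:ℤ) ^ x) (hFB : B * (FF A B k).2 ^ 2 = (b:ℤ) ^ y) :
    a = 10 ∧ b = 3 ∧ c = 13 ∧ x = 1 ∧ y = 7 := by
  set r := 2 * k + 1 with hrdef
  have hk : k ≠ 0 := by rintro rfl; norm_num [hrdef] at hr
  obtain ⟨f', hf'⟩ : ∃ f, f = (FF A B k).2 := ⟨_, rfl⟩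
  have hf0 : f' ≠ 0 := by
    intro h; rw [← hf', h] at hFB; simp at hFB
    have : (0:ℤ) < (b:ℤ)^y := by positivity
    omega
  have hmod := (FF_mod2 A B k).1
  rw [← hf'] at hmod hFB
  have hq : ∀ {q : ℕ}, q.Prime → q ∣ f'.natAbs → q = r := by
    intro q hqp hqf
    have h1 : (q:ℤ) ∣ f' := Int.natCast_dvd.2 hqf
    have h2 : (q:ℤ) ∣ (b:ℤ)^y := by
      rw [← hFB]; exact Dvd.dvd.mul_left (dvd_pow h1 (by norm_num)) _
    have h3 : q ∣ b := by
      have : q ∣ b ^ y := by exact_mod_cast h2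
      exact hqp.dvd_of_dvd_pow this
    have h4 := radb q hqp h3
    have h5 : (q:ℤ) ∣ (2 * k + 1) * A ^ k := (Int.dvd_iff_dvd_of_dvd_sub (h4.trans hmod)).1 h1
    have hqi : Prime (q:ℤ) := Nat.prime_iff_prime_int.1 hqp
    rcases hqi.dvd_or_dvd h5 with h | h
    · have : q ∣ r := by rw [hrdef]; exact_mod_cast h
      exact (Nat.prime_dvd_prime_iff_eq hqp hr).1 this
    · exact absurd (hAB.isUnit_of_dvd' (hqi.dvd_of_dvd_pow h) h4) hqi.not_isUnit
  obtain ⟨j, hj⟩ : ∃ j, f'.natAbs = r ^ j :=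
    ⟨_, Nat.eq_prime_pow_of_unique_prime_dvd (Int.natAbs_ne_zero.2 hf0) hq⟩
  have hfsq : f' ^ 2 = ((r:ℤ) ^ j) ^ 2 := by
    rw [← Int.natAbs_sq, hj]; push_cast; ring
  have hnorm := FF_norm A B k
  rw [hF, ← hf', hfsq, mul_one, ← hrdef] at hnorm
  have hr3 : 3 ≤ r := by omega
  have hAB3 : 2 ≤ A + B := by omega
  have hj0 : j ≠ 0 := by
    rintro rfl
    simp only [pow_zero, one_pow, mul_one] at hnorm
    have : (A+B)^1 < (A+B)^r := pow_lt_pow_right₀ (by omega) (by omega)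
    rw [pow_one] at this
    omega
  have hrf : (r:ℤ) ∣ f' := Int.natCast_dvd.2 (by rw [hj]; exact dvd_pow_self _ hj0)
  have hrb : r ∣ b := by
    have : (r:ℤ) ∣ (b:ℤ)^y := by
      rw [← hFB]; exact Dvd.dvd.mul_left (dvd_pow hrf (by norm_num)) _
    have : r ∣ b ^ y := by exact_mod_cast this
    exact hr.dvd_of_dvd_pow this
  have hrB := radb r hr hrb
  have hri : Prime (r:ℤ) := Nat.prime_iff_prime_int.1 hr
  have hrA : ¬ (r:ℤ) ∣ A := fun h => hri.not_isUnit (hAB.isUnit_of_dvd' h hrB)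
  rcases Nat.lt_or_ge r 5 with h5 | h5
  · have hk1 : k = 1 := by omega
    have hr3' : r = 3 := by omega
    rw [hk1] at hF hf' hFA
    rw [hr3'] at hj hfsq hrb hrB
    have e1 : (FF A B 1).1 = A - 3 * B := by simp [FF]; ring
    have e2 : (FF A B 1).2 = 3 * A - B := by simp [FF]; ring
    rw [e1] at hF hFA
    rw [e2] at hf'
    rw [hF, mul_one] at hFA
    have hF1 : A - 3 * B = 1 ∨ A - 3 * B = -1 := by
      have : (A - 3 * B - 1) * (A - 3 * B + 1) = 0 := by linear_combination hF
      rcases mul_eq_zero.1 this with h | h <;> omega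
    have hpos : 0 < f' := by rcases hF1 with h | h <;> omega
    have hfj : f' = 3 ^ j := by
      have : (f'.natAbs : ℤ) = 3 ^ j := by rw [hj]; push_cast; rfl
      omega
    rw [hfsq] at hFB
    exact half3 a b c x y g Q j Y A B ha hb hc hA hB hQ hBQ hsum hrb (by exact_mod_cast hrB) (by omega)
      hF1 (by rw [← hfj, hf']) hFA (by exact_mod_cast hFB)
  · exfalso
    obtain ⟨C, u, v, hC, -, h2⟩ := FF_modB A B k
    have hrC : (r:ℤ) ∣ C := by
      have h6 : (r:ℤ) ∣ 6 * C := by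
        rw [hC, hrdef]; push_cast; exact Dvd.intro ((2 * k) * (2 * k - 1)) (by ring)
      rcases hri.dvd_or_dvd h6 with h | h
      · have : r ∣ 6 := by exact_mod_cast h
        have : r ≤ 6 := Nat.le_of_dvd (by norm_num) this
        interval_cases r <;> omega
      · exact h
    have hj1 : j = 1 := by
      by_contra hne
      have hr2 : (r:ℤ)^2 ∣ f' := by
        have h : ((r^2 : ℕ):ℤ) ∣ f' :=
          Int.natCast_dvd.2 (by rw [hj]; exact pow_dvd_pow _ (by omega))
        exact_mod_cast h
      rw [← hf'] at h2
      obtain ⟨f1, hf1⟩ := hr2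
      obtain ⟨B1, hB1⟩ := hrB
      obtain ⟨C1, hC1⟩ := hrC
      have hrr : (r:ℤ) = 2 * k + 1 := by rw [hrdef]; push_cast; ring
      have : (r:ℤ) * A ^ (k+1) = r * (r * (A * f1 + C1 * A ^ k * B1 - B1^2 * v)) := by
        rw [← hrr, hf1, hC1, hB1] at h2
        linear_combination -h2
      have := mul_left_cancel₀ hri.ne_zero this
      exact hrA (hri.dvd_of_dvd_pow ⟨_, this⟩)
    subst hj1
    rw [pow_one] at hnorm
    have hBr : (r:ℤ) ≤ B := Int.le_of_dvd hB hrB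
    have h1 : (A+B)^4 ≤ (A+B)^(r-1) := pow_le_pow_right₀ (by omega) (by omega)
    have h2 : (A+B)^r = (A+B) * (A+B)^(r-1) := by rw [← pow_succ']; congr 1
    have h3 : (r:ℤ)^2 < (A+B)^2 := by
      apply pow_lt_pow_left₀ <;> omega
    have h4 : (A+B)^2 ≤ (A+B)^4 := pow_le_pow_right₀ (by omega) (by omega)
    have h6 : (A+B) * (r:ℤ)^2 < (A+B) * (A+B)^(r-1) := by
      apply mul_lt_mul_of_pos_left (by omega) (by omega)
    have h7 : A * 1 ≤ A * (r:ℤ)^2 := by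
      apply mul_le_mul_of_nonneg_left _ hA.le
      have : (1:ℤ)≤ r := by omega
      nlinarith
    rw [h2] at hnorm
    linarith

/-- The exceptional solution. -/
def Exc (a b c x y : ℕ) : Prop :=
  (a = 10 ∧ b = 3 ∧ c = 13 ∧ x = 1 ∧ y = 7) ∨ (b = 10 ∧ a = 3 ∧ c = 13 ∧ y = 1 ∧ x = 7)

lemma prime_dvd_F (b y k q : ℕ) (A B : ℤ) (hAB : IsCoprime A B)
    (hr : (2 * k + 1).Prime) (radb : ∀ q : ℕ, q.Prime → q ∣ b → (q:ℤ) ∣ B)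
    (hFB : B * (FF A B k).2 ^ 2 = (b:ℤ) ^ y) (hqp : q.Prime) (h1 : (q:ℤ) ∣ (FF A B k).2) :
    ((2 * k + 1 : ℕ) : ℤ) ∣ B := by
  have h2 : (q:ℤ) ∣ (b:ℤ)^y := by
    rw [← hFB]; exact Dvd.dvd.mul_left (dvd_pow h1 (by norm_num)) _
  have h3 : q ∣ b := by
    have : q ∣ b ^ y := by exact_mod_cast h2
    exact hqp.dvd_of_dvd_pow this
  have h4 := radb q hqp h3
  have h5 : (q:ℤ) ∣ (2 * k + 1) * A ^ k :=
    (Int.dvd_iff_dvd_of_dvd_sub (h4.trans (FF_mod2 A B k).1)).1 h1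
  have hqi : Prime (q:ℤ) := Nat.prime_iff_prime_int.1 hqp
  rcases hqi.dvd_or_dvd h5 with h | h
  · have : q ∣ 2 * k + 1 := by exact_mod_cast h
    rw [← (Nat.prime_dvd_prime_iff_eq hqp hr).1 this]; exact h4
  · exact absurd (hAB.isUnit_of_dvd' (hqi.dvd_of_dvd_pow h) h4) hqi.not_isUnit

lemma exists_prime_of_sq_ne {f : ℤ} (h : f ^ 2 ≠ 1) : ∃ q : ℕ, q.Prime ∧ (q:ℤ) ∣ f := by
  obtain ⟨q, hq, hd⟩ := Nat.exists_prime_and_dvd (n := f.natAbs) (by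
    intro h1; apply h; rw [← Int.natAbs_sq, h1]; norm_num)
  exact ⟨q, hq, Int.natCast_dvd.2 hd⟩

lemma final_lemma (a b c x y g P Q k : ℕ) (X Y : ℤ) (ha : 1 < a) (hb : 1 < b) (hc : 1 < c)
    (hab : Nat.Coprime a b)
    (hr : (2 * k + 1).Prime) (hP : P = 1 ∨ P = a)
    (hQ : Q = 1 ∨ Q = b)
    (rada : ∀ q : ℕ, q.Prime → q ∣ a → (q:ℤ) ∣ P * X ^ 2)
    (radb : ∀ q : ℕ, q.Prime → q ∣ b → (q:ℤ) ∣ Q * Y ^ 2)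
    (hsum : P * X ^ 2 + Q * Y ^ 2 = (c:ℤ) ^ g)
    (hFA : P * X ^ 2 * (FF (P * X ^ 2) (Q * Y ^ 2) k).1 ^ 2 = (a:ℤ) ^ x)
    (hFB : Q * Y ^ 2 * (FF (P * X ^ 2) (Q * Y ^ 2) k).2 ^ 2 = (b:ℤ) ^ y) :
    Exc a b c x y := by
  obtain ⟨A, hA⟩ : ∃ A : ℤ, A = P * X ^ 2 := ⟨_, rfl⟩
  obtain ⟨B, hB⟩ : ∃ B : ℤ, B = Q * Y ^ 2 := ⟨_, rfl⟩
  rw [← hA] at rada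
  rw [← hB] at radb
  rw [← hA, ← hB] at hsum hFA hFB
  have hA0 : 0 < A := by
    have h0 : 0 ≤ A := by rw [hA]; positivity
    have : A ≠ 0 := by
      intro h; rw [h, zero_mul] at hFA
      have : (0:ℤ) < (a:ℤ)^x := by positivity
      omega
    omega
  have hB0 : 0 < B := by
    have h0 : 0 ≤ B := by rw [hB]; positivity
    have : B ≠ 0 := by
      intro h; rw [h, zero_mul] at hFB
      have : (0:ℤ) < (b:ℤ)^y := by positivity
      omega
    omega
  have hAB : IsCoprime A B := by
    have h1 : IsCoprime ((a:ℤ)^x) ((b:ℤ)^y) := (Nat.isCoprime_iff_coprime.2 hab).pow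
    rw [← hFA, ← hFB] at h1
    exact h1.of_mul_left_left.of_mul_right_left
  obtain ⟨s1, s2⟩ := FF_swap A B k
  have e1 : (FF B A k).1 ^ 2 = (FF A B k).2 ^ 2 := by
    rw [s1, mul_pow, ← pow_mul, mul_comm k 2, pow_mul]; norm_num
  have e2 : (FF B A k).2 ^ 2 = (FF A B k).1 ^ 2 := by
    rw [s2, mul_pow, ← pow_mul, mul_comm k 2, pow_mul]; norm_num
  by_cases h1 : (FF A B k).1 ^ 2 = 1
  · left
    exact half a b c x y g Q k Y A B ha hb hc hA0 hB0 hAB hr hQ hB radb hsum h1 hFA hFB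
  · by_cases h2 : (FF A B k).2 ^ 2 = 1
    · right
      exact half b a c y x g P k X B A hb ha hc hB0 hA0 hAB.symm hr hP hA rada
        (by rw [add_comm]; exact hsum) (by rw [e1, h2])
        (by rw [e1]; exact hFB) (by rw [e2]; exact hFA)
    · exfalso
      obtain ⟨q, hq, hqd⟩ := exists_prime_of_sq_ne h2
      have d1 := prime_dvd_F b y k q A B hAB hr radb hFB hq hqd
      rw [← e2] at h1
      obtain ⟨q', hq', hqd'⟩ := exists_prime_of_sq_ne h1
      have d2 := prime_dvd_F a x k q' B A hAB.symm hr rada (by rw [e2]; exact hFA) hq' hqd'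
      exact (Nat.prime_iff_prime_int.1 hr).not_isUnit (hAB.isUnit_of_dvd' d2 d1)

/-- The complex number `X √P + Y √(-Q)`. -/
noncomputable def el (P Q : ℕ) (X Y : ℤ) : ℂ :=
  (X : ℂ) * ((Real.sqrt P : ℝ) : ℂ) + (Y : ℂ) * (((Real.sqrt Q : ℝ) : ℂ) * Complex.I)

lemma sP (P : ℕ) : ((Real.sqrt P : ℝ) : ℂ) ^ 2 = P := by
  rw [← Complex.ofReal_pow, Real.sq_sqrt (by positivity)]; simp

lemma el_inj {P Q : ℕ} (hP : 0 < P) (hQ : 0 < Q) {X Y X' Y' : ℤ}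
    (h : el P Q X Y = el P Q X' Y') : X = X' ∧ Y = Y' := by
  have hp : Real.sqrt P ≠ 0 := by positivity
  have hq : Real.sqrt Q ≠ 0 := by positivity
  have h1 := congrArg Complex.re h
  have h2 := congrArg Complex.im h
  simp [el] at h1 h2
  constructor
  · rcases h1 with h1 | h1
    · exact h1
    · omega
  · rcases h2 with h2 | h2
    · exact h2
    · omega

lemma el_neg (P Q : ℕ) (X Y : ℤ) : el P Q (-X) (-Y) = - el P Q X Y := by
  simp [el]; ring

lemma el_sq_mul (P Q : ℕ) (X Y U V : ℤ) :
    el P Q X Y ^ 2 * el P Q U V =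
      el P Q ((P * X ^ 2 - Q * Y ^ 2) * U - Q * (2 * X * Y) * V)
        ((P * X ^ 2 - Q * Y ^ 2) * V + P * (2 * X * Y) * U) := by
  have h1 := sP P
  have h2 := sP Q
  have h3 := Complex.I_sq
  simp only [el]
  push_cast
  set s := ((Real.sqrt P : ℝ) : ℂ)
  set t := ((Real.sqrt Q : ℝ) : ℂ)
  rw [← h1, ← h2]
  linear_combination (t ^ 2 * Y ^ 2 * (U * s + V * (t * Complex.I)) +
     2 * X * Y * V * s * t ^ 2) * h3

lemma el_pow (P Q : ℕ) (X Y : ℤ) (k : ℕ) :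
    el P Q X Y ^ (2 * k + 1) = el P Q (X * (FF (P * X ^ 2) (Q * Y ^ 2) k).1)
      (Y * (FF (P * X ^ 2) (Q * Y ^ 2) k).2) := by
  induction k with
  | zero => simp [FF]
  | succ k ih =>
    rw [show 2 * (k + 1) + 1 = 2 + (2 * k + 1) by ring, pow_add, ih, el_sq_mul, FF_succ1, FF_succ2]
    congr 1 <;> ring

/-- Good elements `X √P + Y √(-Q)`, of norm `c^n`, aligned with `τ`. -/
structure GG (a b c P Q : ℕ) (τ X Y : ℤ) (n : ℕ) : Prop where
  norm : P * X ^ 2 + Q * Y ^ 2 = (c:ℤ) ^ n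
  npos : 0 < n
  al : (c:ℤ) ∣ Y - τ * X
  cop : IsCoprime X c
  rada : ∀ q : ℕ, q.Prime → q ∣ a → (q:ℤ) ∣ P * X
  radb : ∀ q : ℕ, q.Prime → q ∣ b → (q:ℤ) ∣ Q * Y

/-- Standing hypotheses. -/
structure HH (a b c P Q : ℕ) (τ : ℤ) : Prop where
  ha : 1 < a
  hb : 1 < b
  hc : 1 < c
  hac : Nat.Coprime a c
  hbc : Nat.Coprime b c
  P0 : 0 < P
  Q0 : 0 < Q
  c2 : IsCoprime (2:ℤ) c
  cP : IsCoprime (P:ℤ) c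
  cQ : IsCoprime (Q:ℤ) c
  ct : IsCoprime τ (c:ℤ)
  ht : (c:ℤ) ∣ P + Q * τ ^ 2

lemma cop_congr {u v c : ℤ} (h : c ∣ u - v) (hv : IsCoprime v c) : IsCoprime u c := by
  obtain ⟨w, hw⟩ := h
  have : u = v + c * w := by linarith
  rw [this]
  exact (IsCoprime.add_mul_left_left_iff).2 hv

lemma align_of {a b c P Q : ℕ} {τ : ℤ} (H : HH a b c P Q τ) {X Y : ℤ}
    (h : (c:ℤ) ∣ P * X ^ 2 + Q * Y ^ 2) (hu : IsCoprime (τ * X + Y) c) :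
    (c:ℤ) ∣ Y - τ * X ∧ IsCoprime X c := by
  have h1 : (c:ℤ) ∣ (Y - τ * X) * (Q * (τ * X + Y)) := by
    obtain ⟨u, hu⟩ := h
    obtain ⟨v, hv⟩ := H.ht
    exact ⟨u - v * X ^ 2, by linear_combination hu - X ^ 2 * hv⟩
  have h2 : (c:ℤ) ∣ Y - τ * X := (H.cQ.mul_left hu).symm.dvd_of_dvd_mul_right h1
  refine ⟨h2, ?_⟩
  have h3 : IsCoprime (2 * τ * X) (c:ℤ) := by
    refine cop_congr ?_ hu
    obtain ⟨w, hw⟩ := h2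
    exact ⟨-w, by linear_combination -hw⟩
  exact h3.of_mul_left_right

lemma K_dvd {a b c P Q : ℕ} {τ X₀ Y₀ X Y : ℤ} {g n m : ℕ} (H : HH a b c P Q τ)
    (G₀ : GG a b c P Q τ X₀ Y₀ g) (G : GG a b c P Q τ X Y n) (hm1 : m ≤ 2 * g) (hm2 : m ≤ n) :
    (c:ℤ) ^ m ∣ (P * X₀ ^ 2 - Q * Y₀ ^ 2) * X + Q * (2 * X₀ * Y₀) * Y ∧
    (c:ℤ) ^ m ∣ (P * X₀ ^ 2 - Q * Y₀ ^ 2) * Y - P * (2 * X₀ * Y₀) * X := by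
  obtain ⟨v, hv⟩ := H.ht
  obtain ⟨w₀, hw₀⟩ := G₀.al
  obtain ⟨w, hw⟩ := G.al
  have hY₀ : Y₀ = τ * X₀ + c * w₀ := by linarith
  have hY : Y = τ * X + c * w := by linarith
  set E := P * X₀ ^ 2 - Q * Y₀ ^ 2 with hE
  set F := 2 * X₀ * Y₀ with hF
  have hEF : E ^ 2 + P * Q * F ^ 2 = (c:ℤ) ^ (2 * g) := by
    rw [mul_comm 2 g, pow_mul, ← G₀.norm, hE, hF]; ring
  have hcop : IsCoprime (E * Y + P * F * X) (c:ℤ) := by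
    have h4 : IsCoprime (2 * 2 * P * τ * X₀ ^ 2 * X) (c:ℤ) :=
      ((((H.c2.mul_left H.c2).mul_left H.cP).mul_left H.ct).mul_left (G₀.cop.pow_left)).mul_left G.cop
    refine cop_congr ?_ h4
    have e1 : (c:ℤ) ∣ E - 2 * P * X₀ ^ 2 := by
      refine ⟨- v * X₀ ^ 2 - Q * (2 * τ * X₀ * w₀ + c * w₀ ^ 2), ?_⟩
      rw [hE, hY₀]; linear_combination -X₀ ^ 2 * hv
    have e2 : (c:ℤ) ∣ F - 2 * τ * X₀ ^ 2 := ⟨2 * X₀ * w₀, by rw [hF, hY₀]; ring⟩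
    obtain ⟨u1, hu1⟩ := e1
    obtain ⟨u2, hu2⟩ := e2
    exact ⟨u1 * Y + 2 * P * X₀ ^ 2 * w + P * X * u2, by
      linear_combination Y * hu1 + 2 * P * X₀ ^ 2 * hw + P * X * hu2⟩
  have hK2 : (c:ℤ) ^ m ∣ E * Y - P * F * X := by
    have h1 : (c:ℤ) ^ m ∣ (E * Y - P * F * X) * (E * Y + P * F * X) := by
      have : (E * Y - P * F * X) * (E * Y + P * F * X)
          = Y ^ 2 * (c:ℤ) ^ (2 * g) - P * F ^ 2 * (c:ℤ) ^ n := by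
        rw [← hEF, ← G.norm]; ring
      rw [this]
      exact dvd_sub (Dvd.dvd.mul_left (pow_dvd_pow _ hm1) _) (Dvd.dvd.mul_left (pow_dvd_pow _ hm2) _)
    exact (hcop.pow_right (n := m)).symm.dvd_of_dvd_mul_right h1
  refine ⟨?_, hK2⟩
  have hn : P * (E * X + Q * F * Y) ^ 2 + Q * (E * Y - P * F * X) ^ 2 = (c:ℤ) ^ (2 * g + n) := by
    rw [pow_add, ← hEF, ← G.norm]; ring
  have h2 : ((c:ℤ) ^ m) ^ 2 ∣ P * (E * X + Q * F * Y) ^ 2 := by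
    have : P * (E * X + Q * F * Y) ^ 2 = (c:ℤ) ^ (2 * g + n) - Q * (E * Y - P * F * X) ^ 2 := by
      linarith
    rw [this]
    refine dvd_sub ?_ (Dvd.dvd.mul_left (pow_dvd_pow_of_dvd hK2 2) _)
    rw [← pow_mul]; exact pow_dvd_pow _ (by omega)
  have h3 : ((c:ℤ) ^ m) ^ 2 ∣ (E * X + Q * F * Y) ^ 2 := by
    refine IsCoprime.dvd_of_dvd_mul_left ?_ h2
    exact (H.cP.symm.pow_left).pow_left
  exact (Int.pow_dvd_pow_iff (by norm_num)).1 h3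

/-- radical conditions descend. -/
lemma rad_desc {a b c P Q : ℕ} {τ X₀ Y₀ X Y U V : ℤ} {g n m : ℕ} (H : HH a b c P Q τ)
    (G₀ : GG a b c P Q τ X₀ Y₀ g) (G : GG a b c P Q τ X Y n)
    (h1 : (P * X₀ ^ 2 - Q * Y₀ ^ 2) * X + Q * (2 * X₀ * Y₀) * Y = (c:ℤ) ^ m * U)
    (h2 : (P * X₀ ^ 2 - Q * Y₀ ^ 2) * Y - P * (2 * X₀ * Y₀) * X = (c:ℤ) ^ m * V) :
    (∀ q : ℕ, q.Prime → q ∣ a → (q:ℤ) ∣ P * U) ∧ (∀ q : ℕ, q.Prime → q ∣ b → (q:ℤ) ∣ Q * V) := by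
  constructor
  · intro q hq hqa
    obtain ⟨s, hs⟩ := G₀.rada q hq hqa
    obtain ⟨t, ht⟩ := G.rada q hq hqa
    have hcop : IsCoprime (q:ℤ) ((c:ℤ)^m) :=
      (Nat.isCoprime_iff_coprime.2 (Nat.Coprime.coprime_dvd_left hqa H.hac)).pow_right
    refine hcop.dvd_of_dvd_mul_left (?_ : (q:ℤ) ∣ (c:ℤ)^m * (P * U))
    exact ⟨(P * X₀ ^ 2 - Q * Y₀ ^ 2) * t + Q * 2 * s * Y₀ * Y, by
      linear_combination -P * h1 + (P * X₀ ^ 2 - Q * Y₀ ^ 2) * ht + Q * 2 * Y₀ * Y * hs⟩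
  · intro q hq hqb
    obtain ⟨s, hs⟩ := G₀.radb q hq hqb
    obtain ⟨t, ht⟩ := G.radb q hq hqb
    have hcop : IsCoprime (q:ℤ) ((c:ℤ)^m) :=
      (Nat.isCoprime_iff_coprime.2 (Nat.Coprime.coprime_dvd_left hqb H.hbc)).pow_right
    refine hcop.dvd_of_dvd_mul_left (?_ : (q:ℤ) ∣ (c:ℤ)^m * (Q * V))
    exact ⟨(P * X₀ ^ 2 - Q * Y₀ ^ 2) * t - P * 2 * s * X₀ * X, by
      linear_combination -Q * h2 + (P * X₀ ^ 2 - Q * Y₀ ^ 2) * ht - P * 2 * X₀ * X * hs⟩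

lemma norm_K {c P Q : ℕ} {X₀ Y₀ X Y U V : ℤ} {g n m l : ℕ} (hc : 1 < c)
    (N₀ : P * X₀ ^ 2 + Q * Y₀ ^ 2 = (c:ℤ) ^ g) (N : P * X ^ 2 + Q * Y ^ 2 = (c:ℤ) ^ n)
    (h1 : (P * X₀ ^ 2 - Q * Y₀ ^ 2) * X + Q * (2 * X₀ * Y₀) * Y = (c:ℤ) ^ m * U)
    (h2 : (P * X₀ ^ 2 - Q * Y₀ ^ 2) * Y - P * (2 * X₀ * Y₀) * X = (c:ℤ) ^ m * V)
    (hl : 2 * g + n = 2 * m + l) : P * U ^ 2 + Q * V ^ 2 = (c:ℤ) ^ l := by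
  have hc0 : ((c:ℤ) ^ (2 * m)) ≠ 0 := by positivity
  apply mul_left_cancel₀ hc0
  have e1 : (c:ℤ) ^ (2 * m) * (P * U ^ 2 + Q * V ^ 2) =
    P * ((c:ℤ) ^ m * U) ^ 2 + Q * ((c:ℤ) ^ m * V) ^ 2 := by ring
  have e2 : (c:ℤ) ^ (2 * m) * (c:ℤ) ^ l = ((c:ℤ) ^ g) ^ 2 * (c:ℤ) ^ n := by
    rw [← pow_add, ← hl]; ring
  rw [e1, e2, ← h1, ← h2, ← N₀, ← N]; ring

lemma step_gt {a b c P Q : ℕ} {τ X₀ Y₀ X Y : ℤ} {g n : ℕ} (H : HH a b c P Q τ)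
    (G₀ : GG a b c P Q τ X₀ Y₀ g) (G : GG a b c P Q τ X Y n) (h : 2 * g < n) :
    ∃ U V, GG a b c P Q τ U V (n - 2 * g) ∧ el P Q X Y = el P Q X₀ Y₀ ^ 2 * el P Q U V := by
  have hc := H.hc
  obtain ⟨⟨U, hU⟩, ⟨V, hV⟩⟩ := K_dvd H G₀ G le_rfl h.le
  have hN := norm_K (l := n - 2 * g) H.hc G₀.norm G.norm hU hV (by omega)
  have hR := rad_desc H G₀ G hU hV
  have hc0 : ((c:ℤ) ^ (2 * g)) ≠ 0 := by positivity
  have hEF : (P * X₀ ^ 2 - Q * Y₀ ^ 2) ^ 2 + P * Q * (2 * X₀ * Y₀) ^ 2 = (c:ℤ) ^ (2 * g) := by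
    rw [mul_comm 2 g, pow_mul, ← G₀.norm]; ring
  have hX : X = (P * X₀ ^ 2 - Q * Y₀ ^ 2) * U - Q * (2 * X₀ * Y₀) * V := by
    apply mul_left_cancel₀ hc0
    linear_combination (P * X₀ ^ 2 - Q * Y₀ ^ 2) * hU - Q * (2 * X₀ * Y₀) * hV - X * hEF
  have hY : Y = (P * X₀ ^ 2 - Q * Y₀ ^ 2) * V + P * (2 * X₀ * Y₀) * U := by
    apply mul_left_cancel₀ hc0
    linear_combination (P * X₀ ^ 2 - Q * Y₀ ^ 2) * hV + P * (2 * X₀ * Y₀) * hU - Y * hEF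
  refine ⟨U, V, ?_, ?_⟩
  · have hal := align_of H (X := U) (Y := V) (by rw [hN]; exact dvd_pow_self _ (by omega)) (by
      have h1 : IsCoprime ((-2 * Q * τ * X₀ ^ 2) * (τ * U + V)) (c:ℤ) := by
        refine cop_congr ?_ G.cop
        obtain ⟨v, hv⟩ := H.ht
        obtain ⟨w, hw⟩ := G₀.al
        have hY₀ : Y₀ = τ * X₀ + c * w := by linarith
        rw [hX]
        refine ⟨-(v * X₀ ^ 2 * U) + Q * (2 * τ * X₀ * w + c * w ^ 2) * U + 2 * Q * X₀ * w * V, ?_⟩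
        rw [hY₀]
        linear_combination (-X₀ ^ 2 * U) * hv
      exact h1.of_mul_left_right)
    exact ⟨hN, by omega, hal.1, hal.2, hR.1, hR.2⟩
  · rw [el_sq_mul, ← hX, ← hY]

lemma step_lt {a b c P Q : ℕ} {τ X₀ Y₀ X Y : ℤ} {g n : ℕ} (H : HH a b c P Q τ)
    (G₀ : GG a b c P Q τ X₀ Y₀ g) (G : GG a b c P Q τ X Y n) (h : n < 2 * g) :
    ∃ U V, GG a b c P Q τ U V (2 * g - n) := by
  have hc := H.hc
  obtain ⟨⟨U, hU⟩, ⟨V, hV⟩⟩ := K_dvd H G₀ G h.le le_rfl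
  have hN := norm_K (l := 2 * g - n) H.hc G₀.norm G.norm hU hV (by omega)
  have hR := rad_desc H G₀ G hU hV
  have hc0 : ((c:ℤ) ^ n) ≠ 0 := by positivity
  have hE : (P * X₀ ^ 2 - Q * Y₀ ^ 2) = P * U * X + Q * V * Y := by
    apply mul_left_cancel₀ hc0
    rw [← G.norm] at hU hV ⊢
    linear_combination P * X * hU + Q * Y * hV
  refine ⟨U, -V, ?_⟩
  have hN' : P * U ^ 2 + Q * (-V) ^ 2 = (c:ℤ) ^ (2 * g - n) := by rw [← hN]; ring
  have hal := align_of H (X := U) (Y := -V) (by rw [hN']; exact dvd_pow_self _ (by omega)) (by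
      have h1 : IsCoprime ((- Q * τ * X) * (τ * U + -V)) (c:ℤ) := by
        have h4 : IsCoprime (2 * P * X₀ ^ 2) (c:ℤ) := (H.c2.mul_left H.cP).mul_left G₀.cop.pow_left
        refine cop_congr ?_ h4
        obtain ⟨v, hv⟩ := H.ht
        obtain ⟨w₀, hw₀⟩ := G₀.al
        obtain ⟨w, hw⟩ := G.al
        have hY₀ : Y₀ = τ * X₀ + c * w₀ := by linarith
        have hY : Y = τ * X + c * w := by linarith
        rw [hY₀, hY] at hE
        refine ⟨- v * U * X - Q * V * w - v * X₀ ^ 2 - Q * (2 * τ * X₀ * w₀ + c * w₀ ^ 2), ?_⟩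
        linear_combination -hE - U * X * hv - X₀ ^ 2 * hv
      exact h1.of_mul_left_right)
  exact ⟨hN', by omega, hal.1, hal.2, hR.1, fun q hq hb => by
    rw [mul_neg, dvd_neg]; exact hR.2 q hq hb⟩

lemma step_ne {a b c P Q : ℕ} {τ X₀ Y₀ X Y : ℤ} {g n : ℕ} (H : HH a b c P Q τ)
    (G₀ : GG a b c P Q τ X₀ Y₀ g) (G : GG a b c P Q τ X Y n) (h : n = 2 * g) : False := by
  obtain ⟨⟨U, hU⟩, ⟨V, hV⟩⟩ := K_dvd H G₀ G h.le le_rfl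
  have hN := norm_K (l := 0) H.hc G₀.norm G.norm hU hV (by omega)
  obtain ⟨ra, rb⟩ := rad_desc H G₀ G hU hV
  rw [pow_zero] at hN
  have hP := H.P0
  have hQ := H.Q0
  obtain ⟨q, hq, hqa⟩ := Nat.exists_prime_and_dvd (n := a) (by have := H.ha; omega)
  obtain ⟨q', hq', hqb⟩ := Nat.exists_prime_and_dvd (n := b) (by have := H.hb; omega)
  have ra := ra q hq hqa
  have rb := rb q' hq' hqb
  have h1 : 0 ≤ P * U ^ 2 := by positivity
  have h2 : 0 ≤ Q * V ^ 2 := by positivity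
  rcases eq_or_ne ((P:ℤ) * U ^ 2) 0 with h0 | h0
  · have : (q':ℤ) ∣ 1 := by
      rw [← hN, h0, zero_add, pow_two, ← mul_assoc]; exact Dvd.dvd.mul_right rb _
    exact (Nat.prime_iff_prime_int.1 hq').not_isUnit (isUnit_of_dvd_one this)
  · have h3 : Q * V ^ 2 = 0 := by omega
    have : (q:ℤ) ∣ 1 := by
      rw [← hN, h3, add_zero, pow_two, ← mul_assoc]; exact Dvd.dvd.mul_right ra _
    exact (Nat.prime_iff_prime_int.1 hq).not_isUnit (isUnit_of_dvd_one this)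

lemma step_eq {a b c P Q : ℕ} {τ X₀ Y₀ X Y : ℤ} {g : ℕ} (H : HH a b c P Q τ)
    (G₀ : GG a b c P Q τ X₀ Y₀ g) (G : GG a b c P Q τ X Y g) :
    el P Q X Y = el P Q X₀ Y₀ ∨ el P Q X Y = - el P Q X₀ Y₀ := by
  have hc := H.hc
  obtain ⟨w₀, hw₀⟩ := G₀.al
  obtain ⟨w, hw⟩ := G.al
  have hY₀ : Y₀ = τ * X₀ + c * w₀ := by linarith
  have hY : Y = τ * X + c * w := by linarith
  have hcop : IsCoprime (X₀ * Y + X * Y₀) (c:ℤ) := by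
    refine cop_congr ?_ (((H.c2.mul_left H.ct).mul_left G₀.cop).mul_left G.cop)
    exact ⟨X₀ * w + X * w₀, by rw [hY, hY₀]; ring⟩
  have hV : (c:ℤ) ^ g ∣ X₀ * Y - X * Y₀ := by
    have h1 : (c:ℤ) ^ g ∣ (X₀ * Y - X * Y₀) * (Q * (X₀ * Y + X * Y₀)) := by
      refine ⟨X₀ ^ 2 - X ^ 2, ?_⟩
      linear_combination X₀ ^ 2 * G.norm - X ^ 2 * G₀.norm
    exact ((H.cQ.mul_left hcop).pow_right (n := g)).symm.dvd_of_dvd_mul_right h1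
  have hn : (P * X₀ * X + Q * Y₀ * Y) ^ 2 + P * Q * (X₀ * Y - X * Y₀) ^ 2 = ((c:ℤ) ^ g) ^ 2 := by
    rw [pow_two ((c:ℤ)^g)]; nth_rewrite 1 [← G.norm]; rw [← G₀.norm]; ring
  have hc0 : 0 < (c:ℤ) ^ g := by positivity
  have hP := H.P0
  have hQ := H.Q0
  have hU : P * X₀ * X + Q * Y₀ * Y ≠ 0 := by
    intro h0
    obtain ⟨q, hq, hqa⟩ := Nat.exists_prime_and_dvd (n := a) (by have := H.ha; omega)
    have hqi := Nat.prime_iff_prime_int.1 hq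
    have hcop : IsCoprime (q:ℤ) (c:ℤ) :=
      (Nat.isCoprime_iff_coprime.2 (Nat.Coprime.coprime_dvd_left hqa H.hac))
    have key : ∀ X Y : ℤ, GG a b c P Q τ X Y g → ¬ (q:ℤ) ∣ Q * Y := by
      intro X Y G hd
      have : (q:ℤ) ∣ (c:ℤ)^g := by
        rw [← G.norm]
        refine dvd_add ?_ ?_
        · rw [pow_two, ← mul_assoc]; exact Dvd.dvd.mul_right (G.rada q hq hqa) _
        · rw [pow_two, ← mul_assoc]; exact Dvd.dvd.mul_right hd _
      exact hqi.not_isUnit (hcop.pow_right.isUnit_of_dvd' dvd_rfl this)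
    have h1 : (q:ℤ) ∣ Q * Y₀ * Y := by
      have : Q * Y₀ * Y = - (P * X₀ * X) := by linarith
      rw [this, dvd_neg]; exact Dvd.dvd.mul_right (G₀.rada q hq hqa) _
    rcases hqi.dvd_or_dvd h1 with h | h
    · exact key _ _ G₀ h
    · exact key _ _ G (Dvd.dvd.mul_left h _)
  have hV0 : X₀ * Y - X * Y₀ = 0 := by
    by_contra hne
    obtain ⟨s, hs⟩ := hV
    have hs0 : s ≠ 0 := by rintro rfl; simp at hs; exact hne hs
    have hs1 : 1 ≤ s ^ 2 := by have : 0 < s ^ 2 := by positivity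
                               omega
    have h1 : 0 < (P * X₀ * X + Q * Y₀ * Y) ^ 2 := by positivity
    have h2 : (1:ℤ) ≤ P * Q := by
      have : 0 < P * Q := by positivity
      exact_mod_cast this
    rw [hs, mul_pow] at hn
    have h3 : ((c:ℤ)^g)^2 * 1 ≤ ((c:ℤ)^g)^2 * s ^ 2 := mul_le_mul_of_nonneg_left hs1 (by positivity)
    have h4 : 1 * (((c:ℤ)^g)^2 * s ^ 2) ≤ P * Q * (((c:ℤ)^g)^2 * s ^ 2) :=
      mul_le_mul_of_nonneg_right h2 (by positivity)
    linarith
  rw [hV0] at hn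
  have hU2 : P * X₀ * X + Q * Y₀ * Y = (c:ℤ)^g ∨ P * X₀ * X + Q * Y₀ * Y = -(c:ℤ)^g :=
    sq_eq_sq_iff_eq_or_eq_neg.1 (by linarith)
  rcases hU2 with h | h
  · left
    have e1 : X = X₀ := by
      apply mul_left_cancel₀ hc0.ne'
      linear_combination -X * G₀.norm + X₀ * h - Q * Y₀ * hV0
    have e2 : Y = Y₀ := by
      apply mul_left_cancel₀ hc0.ne'
      linear_combination -Y * G₀.norm + Y₀ * h + P * X₀ * hV0
    rw [e1, e2]
  · right
    have e1 : X = -X₀ := by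
      apply mul_left_cancel₀ hc0.ne'
      linear_combination -X * G₀.norm + X₀ * h - Q * Y₀ * hV0
    have e2 : Y = -Y₀ := by
      apply mul_left_cancel₀ hc0.ne'
      linear_combination -Y * G₀.norm + Y₀ * h + P * X₀ * hV0
    rw [e1, e2, el_neg]

lemma gen {a b c P Q : ℕ} {τ : ℤ} (H : HH a b c P Q τ) (hex : ∃ n X Y, GG a b c P Q τ X Y n) :
    ∃ g X₀ Y₀, GG a b c P Q τ X₀ Y₀ g ∧ ∀ n X Y, GG a b c P Q τ X Y n →
      ∃ j, el P Q X Y = el P Q X₀ Y₀ ^ (2 * j + 1) ∨ el P Q X Y = - el P Q X₀ Y₀ ^ (2 * j + 1) := by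
  classical
  obtain ⟨X₀, Y₀, G₀⟩ := Nat.find_spec hex
  have hmin : ∀ n X Y, GG a b c P Q τ X Y n → Nat.find hex ≤ n :=
    fun n X Y G => Nat.find_min' hex ⟨X, Y, G⟩
  set g := Nat.find hex
  refine ⟨g, X₀, Y₀, G₀, ?_⟩
  intro n
  induction n using Nat.strong_induction_on with
  | _ n ih =>
    intro X Y G
    have h0 := hmin n X Y G
    have hg := G₀.npos
    rcases lt_trichotomy n (2 * g) with h | h | h
    · obtain ⟨U, V, G'⟩ := step_lt H G₀ G h
      have := hmin _ _ _ G'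
      have hng : n = g := by omega
      rw [hng] at G
      exact ⟨0, by simpa using step_eq H G₀ G⟩
    · exact (step_ne H G₀ G h).elim
    · obtain ⟨U, V, G', he⟩ := step_gt H G₀ G h
      obtain ⟨j, hj⟩ := ih _ (by omega) U V G'
      refine ⟨j + 1, ?_⟩
      have e : 2 * (j + 1) + 1 = 2 + (2 * j + 1) := by ring
      rw [he, e, pow_add]
      rcases hj with h | h
      · left; rw [h]
      · right; rw [h]; ring

lemma one_sol {a b c P Q x y : ℕ} {τ X₀ Y₀ X Y : ℤ} {g j : ℕ} (H : HH a b c P Q τ)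
    (hab : Nat.Coprime a b) (hP : P = 1 ∨ P = a) (hQ : Q = 1 ∨ Q = b)
    (G₀ : GG a b c P Q τ X₀ Y₀ g) (hX : P * X ^ 2 = (a:ℤ) ^ x) (hY : Q * Y ^ 2 = (b:ℤ) ^ y)
    (hj : j ≠ 0)
    (h : el P Q X Y = el P Q X₀ Y₀ ^ (2 * j + 1) ∨ el P Q X Y = - el P Q X₀ Y₀ ^ (2 * j + 1)) :
    Exc a b c x y := by
  have hr : (2 * j + 1).minFac.Prime := Nat.minFac_prime (by omega)
  obtain ⟨m, hm⟩ := Nat.minFac_dvd (2 * j + 1)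
  set r := (2 * j + 1).minFac
  have hodd : Odd (r * m) := ⟨j, by omega⟩
  obtain ⟨⟨k, hk⟩, ⟨i, hi⟩⟩ := Nat.odd_mul.1 hodd
  have hpow : el P Q X₀ Y₀ ^ (2 * j + 1) = (el P Q X₀ Y₀ ^ (2 * i + 1)) ^ (2 * k + 1) := by
    rw [← pow_mul, hm, hk, hi, mul_comm]
  rw [el_pow P Q X₀ Y₀ i] at hpow
  have hn := FF_norm (P * X₀ ^ 2) (Q * Y₀ ^ 2) i
  set f := (FF (P * X₀ ^ 2) (Q * Y₀ ^ 2) i).1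
  set f' := (FF (P * X₀ ^ 2) (Q * Y₀ ^ 2) i).2
  rw [hpow, el_pow] at h
  set F := (FF (P * (X₀ * f) ^ 2) (Q * (Y₀ * f') ^ 2) k).1 with hF
  set F' := (FF (P * (X₀ * f) ^ 2) (Q * (Y₀ * f') ^ 2) k).2 with hF'
  have hsq : X ^ 2 = (X₀ * f * F) ^ 2 ∧ Y ^ 2 = (Y₀ * f' * F') ^ 2 := by
    rcases h with h | h
    · obtain ⟨e1, e2⟩ := el_inj H.P0 H.Q0 h
      rw [e1, e2]; exact ⟨rfl, rfl⟩
    · rw [← el_neg] at h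
      obtain ⟨e1, e2⟩ := el_inj H.P0 H.Q0 h
      rw [e1, e2]; constructor <;> ring
  refine final_lemma a b c x y (g * (2 * i + 1)) P Q k (X₀ * f) (Y₀ * f') H.ha H.hb H.hc hab
    (hk ▸ hr) hP hQ ?_ ?_ ?_ ?_ ?_
  · intro q hq hqa
    have := G₀.rada q hq hqa
    have e : P * (X₀ * f) ^ 2 = P * X₀ * (X₀ * f ^ 2) := by ring
    rw [e]; exact Dvd.dvd.mul_right this _
  · intro q hq hqa
    have := G₀.radb q hq hqa
    have e : Q * (Y₀ * f') ^ 2 = Q * Y₀ * (Y₀ * f' ^ 2) := by ring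
    rw [e]; exact Dvd.dvd.mul_right this _
  · rw [G₀.norm] at hn
    rw [pow_mul, ← hn]; ring
  · rw [← hX, hsq.1]; ring
  · rw [← hY, hsq.2]; ring

lemma rad_base {q P : ℕ} {a X : ℤ} {x : ℕ} (hX : P * X ^ 2 = a ^ x) (hx : 0 < x) (hq : q.Prime)
    (hqa : (q:ℤ) ∣ a) : (q:ℤ) ∣ P * X := by
  have hqi := Nat.prime_iff_prime_int.1 hq
  have h1 : (q:ℤ) ∣ P * X ^ 2 := by rw [hX]; exact dvd_pow hqa (by omega)
  rcases hqi.dvd_or_dvd h1 with h | h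
  · exact Dvd.dvd.mul_right h _
  · exact Dvd.dvd.mul_left (hqi.dvd_of_dvd_pow h) _

lemma KEY {a b c x₁ y₁ z₁ x₂ y₂ z₂ : ℕ} (hab : Nat.Coprime a b) (hac : Nat.Coprime a c)
    (hbc : Nat.Coprime b c) (ha1 : 1 < a) (hb1 : 1 < b) (hc1 : 1 < c) (hcodd : Odd c)
    (hx₁ : 0 < x₁) (hy₁ : 0 < y₁) (hz₁ : 0 < z₁) (h₁ : a ^ x₁ + b ^ y₁ = c ^ z₁)
    (hx₂ : 0 < x₂) (hy₂ : 0 < y₂) (hz₂ : 0 < z₂) (h₂ : a ^ x₂ + b ^ y₂ = c ^ z₂)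
    (hx : x₁ % 2 = x₂ % 2) (hy : y₁ % 2 = y₂ % 2)
    (h : (c:ℤ) ∣ (a:ℤ) ^ (x₁ / 2) * (b:ℤ) ^ (y₂ / 2) - (a:ℤ) ^ (x₂ / 2) * (b:ℤ) ^ (y₁ / 2) ∨
      (c:ℤ) ∣ (a:ℤ) ^ (x₁ / 2) * (b:ℤ) ^ (y₂ / 2) + (a:ℤ) ^ (x₂ / 2) * (b:ℤ) ^ (y₁ / 2)) :
    (x₁ = x₂ ∧ y₁ = y₂) ∨ Exc a b c x₁ y₁ ∨ Exc a b c x₂ y₂ := by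
  have hac' : IsCoprime (a:ℤ) c := Nat.isCoprime_iff_coprime.2 hac
  have hbc' : IsCoprime (b:ℤ) c := Nat.isCoprime_iff_coprime.2 hbc
  obtain ⟨P, hPd⟩ : ∃ P, P = a ^ (x₁ % 2) := ⟨_, rfl⟩
  obtain ⟨Q, hQd⟩ : ∃ Q, Q = b ^ (y₁ % 2) := ⟨_, rfl⟩
  have eX₁ : P * ((a:ℤ) ^ (x₁ / 2)) ^ 2 = (a:ℤ) ^ x₁ := by
    rw [hPd]; push_cast; rw [← pow_mul, ← pow_add]; congr 1; omega
  have eX₂ : P * ((a:ℤ) ^ (x₂ / 2)) ^ 2 = (a:ℤ) ^ x₂ := by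
    rw [hPd]; push_cast; rw [← pow_mul, ← pow_add]; congr 1; omega
  have eY₁ : Q * ((b:ℤ) ^ (y₁ / 2)) ^ 2 = (b:ℤ) ^ y₁ := by
    rw [hQd]; push_cast; rw [← pow_mul, ← pow_add]; congr 1; omega
  have eY₂ : Q * ((b:ℤ) ^ (y₂ / 2)) ^ 2 = (b:ℤ) ^ y₂ := by
    rw [hQd]; push_cast; rw [← pow_mul, ← pow_add]; congr 1; omega
  have hX₁c : IsCoprime ((a:ℤ) ^ (x₁ / 2)) c := hac'.pow_left
  have hX₂c : IsCoprime ((a:ℤ) ^ (x₂ / 2)) c := hac'.pow_left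
  have hY₁c : IsCoprime ((b:ℤ) ^ (y₁ / 2)) c := hbc'.pow_left
  have hPc : IsCoprime (P:ℤ) c := by rw [hPd]; push_cast; exact hac'.pow_left
  have hQc : IsCoprime (Q:ℤ) c := by rw [hQd]; push_cast; exact hbc'.pow_left
  have hP : P = 1 ∨ P = a := by
    rcases Nat.mod_two_eq_zero_or_one x₁ with h | h <;> rw [hPd, h] <;> simp
  have hQ : Q = 1 ∨ Q = b := by
    rcases Nat.mod_two_eq_zero_or_one y₁ with h | h <;> rw [hQd, h] <;> simp
  have n₁ : (a:ℤ) ^ x₁ + (b:ℤ) ^ y₁ = (c:ℤ) ^ z₁ := by exact_mod_cast h₁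
  have n₂ : (a:ℤ) ^ x₂ + (b:ℤ) ^ y₂ = (c:ℤ) ^ z₂ := by exact_mod_cast h₂
  obtain ⟨X₁, hX₁⟩ : ∃ X, X = (a:ℤ) ^ (x₁ / 2) := ⟨_, rfl⟩
  obtain ⟨X₂, hX₂⟩ : ∃ X, X = (a:ℤ) ^ (x₂ / 2) := ⟨_, rfl⟩
  obtain ⟨Y₁, hY₁⟩ : ∃ X, X = (b:ℤ) ^ (y₁ / 2) := ⟨_, rfl⟩
  obtain ⟨Y₂, hY₂⟩ : ∃ X, X = (b:ℤ) ^ (y₂ / 2) := ⟨_, rfl⟩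
  rw [← hX₁, ← hX₂, ← hY₁, ← hY₂] at h
  rw [← hX₁] at eX₁ hX₁c
  rw [← hX₂] at eX₂ hX₂c
  rw [← hY₁] at eY₁ hY₁c
  rw [← hY₂] at eY₂
  clear hX₁ hX₂ hY₁ hY₂
  obtain ⟨u, v, huv⟩ := hX₁c
  have H : HH a b c P Q (u * Y₁) := by
    refine ⟨ha1, hb1, hc1, hac, hbc, ?_, ?_, ?_, hPc, hQc, ?_, ?_⟩
    · rw [hPd]; positivity
    · rw [hQd]; positivity
    · obtain ⟨w, hw⟩ := hcodd
      exact ⟨-w, 1, by rw [hw]; push_cast; ring⟩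
    · exact IsCoprime.mul_left ⟨X₁, v, by linarith⟩ hY₁c
    · obtain ⟨z, rfl⟩ : ∃ z, z₁ = z + 1 := ⟨z₁ - 1, by omega⟩
      refine ⟨u ^ 2 * c ^ z + P * v * (1 + u * X₁), ?_⟩
      have : u ^ 2 * (P * X₁ ^ 2 + Q * Y₁ ^ 2) = u ^ 2 * c ^ (z+1) := by rw [eX₁, eY₁, n₁]
      rw [pow_succ] at this
      linear_combination this - P * (1 + u * X₁) * huv
  have hqa : ∀ q : ℕ, q ∣ a → (q:ℤ) ∣ (a:ℤ) := fun q h => by exact_mod_cast h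
  have hqb : ∀ q : ℕ, q ∣ b → (q:ℤ) ∣ (b:ℤ) := fun q h => by exact_mod_cast h
  have G₁ : GG a b c P Q (u * Y₁) X₁ Y₁ z₁ :=
    ⟨by rw [eX₁, eY₁, n₁], hz₁, ⟨Y₁ * v, by linear_combination -Y₁ * huv⟩, ⟨u, v, huv⟩,
      fun q hq h => rad_base eX₁ hx₁ hq (hqa q h), fun q hq h => rad_base eY₁ hy₁ hq (hqb q h)⟩
  obtain ⟨Y₂', hY₂', h⟩ : ∃ Y₂', Y₂' ^ 2 = Y₂ ^ 2 ∧ (c:ℤ) ∣ X₁ * Y₂' - X₂ * Y₁ := by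
    rcases h with h | h
    · exact ⟨Y₂, rfl, h⟩
    · refine ⟨-Y₂, by ring, ?_⟩
      rw [← dvd_neg]
      have e : -(X₁ * -Y₂ - X₂ * Y₁) = X₁ * Y₂ + X₂ * Y₁ := by ring
      rw [e]; exact h
  rw [← hY₂'] at eY₂
  have G₂ : GG a b c P Q (u * Y₁) X₂ Y₂' z₂ := by
    refine ⟨by rw [eX₂, eY₂, n₂], hz₂, ?_, hX₂c,
      fun q hq h => rad_base eX₂ hx₂ hq (hqa q h), fun q hq h => rad_base eY₂ hy₂ hq (hqb q h)⟩
    obtain ⟨w, hw⟩ := h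
    exact ⟨u * w + v * Y₂', by linear_combination u * hw - Y₂' * huv⟩
  obtain ⟨g, X₀, Y₀, G₀, hall⟩ := gen H ⟨_, _, _, G₁⟩
  obtain ⟨j₁, hj₁⟩ := hall _ _ _ G₁
  obtain ⟨j₂, hj₂⟩ := hall _ _ _ G₂
  by_cases hj10 : j₁ = 0
  · by_cases hj20 : j₂ = 0
    · left
      subst hj10 hj20
      simp only [mul_zero, zero_add, pow_one] at hj₁ hj₂
      have key : ∀ X Y, (el P Q X Y = el P Q X₀ Y₀ ∨ el P Q X Y = -el P Q X₀ Y₀) →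
          X ^ 2 = X₀ ^ 2 ∧ Y ^ 2 = Y₀ ^ 2 := by
        intro X Y h
        rcases h with h | h
        · obtain ⟨e1, e2⟩ := el_inj H.P0 H.Q0 h
          rw [e1, e2]; exact ⟨rfl, rfl⟩
        · rw [← el_neg] at h
          obtain ⟨e1, e2⟩ := el_inj H.P0 H.Q0 h
          rw [e1, e2]; constructor <;> ring
      obtain ⟨k1, k2⟩ := key _ _ hj₁
      obtain ⟨k3, k4⟩ := key _ _ hj₂
      constructor
      · have : (a:ℤ) ^ x₁ = (a:ℤ) ^ x₂ := by rw [← eX₁, ← eX₂, k1, k3]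
        have : a ^ x₁ = a ^ x₂ := by exact_mod_cast this
        exact Nat.pow_right_injective ha1 this
      · have : (b:ℤ) ^ y₁ = (b:ℤ) ^ y₂ := by rw [← eY₁, ← eY₂, k2, k4]
        have : b ^ y₁ = b ^ y₂ := by exact_mod_cast this
        exact Nat.pow_right_injective hb1 this
    · right; right
      exact one_sol H hab hP hQ G₀ eX₂ eY₂ hj20 hj₂
  · right; left
    exact one_sol H hab hP hQ G₀ eX₁ eY₁ hj10 hj₁

lemma tor_even {A : Type*} [AddCommGroup A] {x : A} (h : x + x = 0) {n : ℤ} (hn : Even n) :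
    n • x = 0 := by
  obtain ⟨k, rfl⟩ := hn
  rw [add_smul, ← smul_add, h, smul_zero]

lemma tor_odd {A : Type*} [AddCommGroup A] {x : A} (h : x + x = 0) {n : ℤ} (hn : Odd n) :
    n • x = x := by
  obtain ⟨k, rfl⟩ := hn
  rw [add_smul, one_smul, tor_even h (even_two_mul k), zero_add]

lemma tor_or {A : Type*} [AddCommGroup A] {x : A} (h : x + x = 0) (n : ℤ) :
    n • x = 0 ∨ n • x = x := by
  rcases Int.even_or_odd n with hn | hn
  · exact Or.inl (tor_even h hn)
  · exact Or.inr (tor_odd h hn)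

lemma rel_desc (p q r : ℤ × ℤ) : ∀ N : ℕ, ∀ n₁ n₂ n₃ : ℤ,
    n₁.natAbs + n₂.natAbs + n₃.natAbs ≤ N → ¬ (n₁ = 0 ∧ n₂ = 0 ∧ n₃ = 0) →
    n₁ • p + n₂ • q + n₃ • r = 0 →
    ∃ m₁ m₂ m₃ : ℤ, m₁ • p + m₂ • q + m₃ • r = 0 ∧ ¬ (Even m₁ ∧ Even m₂ ∧ Even m₃) := by
  intro N
  induction N with
  | zero => intro n₁ n₂ n₃ h h0; omega
  | succ N ih =>
    intro n₁ n₂ n₃ h h0 hr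
    by_cases he : Even n₁ ∧ Even n₂ ∧ Even n₃
    · obtain ⟨⟨k₁, rfl⟩, ⟨k₂, rfl⟩, ⟨k₃, rfl⟩⟩ := he
      apply ih k₁ k₂ k₃ (by omega) (by omega)
      have h1 := congrArg Prod.fst hr
      have h2 := congrArg Prod.snd hr
      simp at h1 h2
      ext
      · simp; linarith
      · simp; linarith
    · exact ⟨n₁, n₂, n₃, hr, he⟩

lemma rel_exists (p q r : ℤ × ℤ) (hp : p.1 ≠ 0) :
    ∃ m₁ m₂ m₃ : ℤ, m₁ • p + m₂ • q + m₃ • r = 0 ∧ ¬ (Even m₁ ∧ Even m₂ ∧ Even m₃) := by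
  by_cases h : p.1 * q.2 - p.2 * q.1 = 0
  · refine rel_desc p q r _ q.1 (-p.1) 0 le_rfl (by simp [hp]) ?_
    ext
    · simp; ring
    · simp; linarith
  · refine rel_desc p q r _ (q.1 * r.2 - q.2 * r.1) (r.1 * p.2 - r.2 * p.1)
      (p.1 * q.2 - p.2 * q.1) le_rfl (by tauto) ?_
    ext
    · simp; ring
    · simp; ring

lemma abs_case1 {A : Type*} [AddCommGroup A] (f : ℤ × ℤ →+ A) {e : A} (he : e ≠ 0)
    (he2 : e + e = 0) (s₁ s₂ s₃ : ℤ × ℤ) (h₁ : f s₁ = e) (h₂ : f s₂ = e) (h₃ : f s₃ = e)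
    (hd : Odd ((s₁.1 - s₃.1) * (s₂.2 - s₃.2) - (s₁.2 - s₃.2) * (s₂.1 - s₃.1))) : False := by
  have hv : f (s₁ - s₃) = 0 := by rw [map_sub, h₁, h₃, sub_self]
  have hw : f (s₂ - s₃) = 0 := by rw [map_sub, h₂, h₃, sub_self]
  have key : ((s₁.1 - s₃.1) * (s₂.2 - s₃.2) - (s₁.2 - s₃.2) * (s₂.1 - s₃.1)) • s₃ =
      (s₃.1 * (s₂.2 - s₃.2) - s₃.2 * (s₂.1 - s₃.1)) • (s₁ - s₃) +
      ((s₁.1 - s₃.1) * s₃.2 - (s₁.2 - s₃.2) * s₃.1) • (s₂ - s₃) := by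
    ext
    · simp; ring
    · simp; ring
  have h := congrArg f key
  rw [map_add, map_zsmul, map_zsmul, map_zsmul, hv, hw, h₃, tor_odd he2 hd] at h
  simp at h
  exact he h

lemma abs_case2 {A : Type*} [AddCommGroup A] (f : ℤ × ℤ →+ A) {e : A}
    (he : e ≠ 0) (he2 : e + e = 0) (s₁ s₂ s₃ u : ℤ × ℤ) (h₁ : f s₁ = e) (h₂ : f s₂ = e)
    (h₃ : f s₃ = e) (hp : s₁.1 ≠ 0) (hu : s₁ = s₂ + u + u) (hu0 : f u ≠ 0) (hue : f u ≠ e) :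
    ∃ t, s₃ = s₁ + t + t ∧ (f t = 0 ∨ f t = e ∨ f (t + u) = 0 ∨ f (t + u) = e) := by
  have hw : f (s₃ - s₁) = 0 := by rw [map_sub, h₁, h₃, sub_self]
  have hu2 : f u + f u = 0 := by
    have := congrArg f hu
    rw [map_add, map_add, h₁, h₂, add_assoc] at this
    simpa using this
  obtain ⟨n₁, n₂, n₃, hr, hne⟩ := rel_exists s₁ u (s₃ - s₁) hp
  have h := congrArg f hr
  rw [map_add, map_add, map_zsmul, map_zsmul, map_zsmul, hw, h₁, smul_zero, add_zero, map_zero] at h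
  have hn2 : Even n₂ := by
    rw [← Int.not_odd_iff_even]
    intro ho
    rw [tor_odd hu2 ho] at h
    rcases tor_or he2 n₁ with h' | h' <;> rw [h'] at h
    · exact hu0 (by simpa using h)
    · exact hue (by rw [← he2] at h; exact add_left_cancel h)
  have hn1 : Even n₁ := by
    rw [← Int.not_odd_iff_even]
    intro ho
    rw [tor_odd he2 ho, tor_even hu2 hn2, add_zero] at h
    exact he h
  have hn3 : Odd n₃ := by
    rw [← Int.not_even_iff_odd]; tauto
  obtain ⟨k₁, rfl⟩ := hn1
  obtain ⟨k₂, rfl⟩ := hn2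
  obtain ⟨k₃, rfl⟩ := hn3
  have e1 := congrArg Prod.fst hr
  have e2 := congrArg Prod.snd hr
  simp at e1 e2
  let t : ℤ × ℤ := (-(k₁ * s₁.1 + k₂ * u.1 + k₃ * (s₃.1 - s₁.1)),
    -(k₁ * s₁.2 + k₂ * u.2 + k₃ * (s₃.2 - s₁.2)))
  have ht : s₃ = s₁ + t + t := by
    ext
    · simp [t]; linarith
    · simp [t]; linarith
  have ht' : t = -(k₁ • s₁ + k₂ • u + k₃ • (s₃ - s₁)) := by
    ext <;> simp [t]
  have hft : f t = -(k₁ • e + k₂ • f u) := by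
    rw [ht', map_neg, map_add, map_add, map_zsmul, map_zsmul, map_zsmul, hw, h₁, smul_zero,
      add_zero]
  have hne : -e = e := neg_eq_of_add_eq_zero_left he2
  refine ⟨t, ht, ?_⟩
  rw [map_add, hft]
  rcases tor_or he2 k₁ with h1 | h1 <;> rcases tor_or hu2 k₂ with h2 | h2 <;> rw [h1, h2] <;>
    simp [hne]

lemma pow_mod_per {p o m : ℕ} (n : ℕ) (h : p ^ o % m = 1 % m) : p ^ n % m = p ^ (n % o) % m := by
  have h1 : p ^ o ≡ 1 [MOD m] := h
  have h2 : p ^ n = (p ^ o) ^ (n / o) * p ^ (n % o) := by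
    rw [← pow_mul, ← pow_add, Nat.div_add_mod]
  have h3 := ((h1.pow (n / o)).mul_right (p ^ (n % o)))
  rw [← h2, one_pow, one_mul] at h3
  exact h3

lemma exc_par {x y z : ℕ} (hx : 0 < x) (hz : 0 < z) (h : 10 ^ x + 3 ^ y = 13 ^ z) :
    x % 2 = 1 ∧ y % 2 = 1 := by
  have hx5 : 10 ^ x % 5 = 0 := Nat.mod_eq_zero_of_dvd (dvd_pow (by norm_num) hx.ne')
  have hz13 : 13 ^ z % 13 = 0 := Nat.mod_eq_zero_of_dvd (dvd_pow_self _ hz.ne')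
  have m5 : (10 ^ x + 3 ^ y) % 5 = 13 ^ z % 5 := by rw [h]
  have m7 : (10 ^ x + 3 ^ y) % 7 = 13 ^ z % 7 := by rw [h]
  have m13 : (10 ^ x + 3 ^ y) % 13 = 0 := by rw [h, hz13]
  rw [Nat.add_mod, hx5, pow_mod_per (p := 3) (o := 12) y (by norm_num),
    pow_mod_per (p := 13) (o := 4) z (by norm_num)] at m5
  rw [Nat.add_mod, pow_mod_per (p := 10) (o := 6) x (by norm_num),
    pow_mod_per (p := 3) (o := 12) y (by norm_num),
    pow_mod_per (p := 13) (o := 4) z (by norm_num)] at m7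
  rw [Nat.add_mod, pow_mod_per (p := 10) (o := 6) x (by norm_num),
    pow_mod_per (p := 3) (o := 12) y (by norm_num)] at m13
  have hx6 : x % 6 < 6 := Nat.mod_lt _ (by norm_num)
  have hy12 : y % 12 < 12 := Nat.mod_lt _ (by norm_num)
  have hz4 : z % 4 < 4 := Nat.mod_lt _ (by norm_num)
  have e1 : x % 2 = (x % 6) % 2 := by omega
  have e2 : y % 2 = (y % 12) % 2 := by omega
  rw [e1, e2]
  revert m5 m7 m13
  generalize x % 6 = X at *
  generalize y % 12 = Y at *
  generalize z % 4 = Z at *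
  clear e1 e2 h
  interval_cases X <;> interval_cases Y <;> interval_cases Z <;> simp

lemma chi_exists {a b c : ℕ} (hac : Nat.Coprime a c) (hbc : Nat.Coprime b c) (hc : 2 < c) :
    ∃ (f : ℤ × ℤ →+ Additive (ZMod c)ˣ) (e : Additive (ZMod c)ˣ), e ≠ 0 ∧ e + e = 0 ∧
      (∀ x y z : ℕ, 0 < z → a ^ x + b ^ y = c ^ z → f ((x:ℤ), (y:ℤ)) = e) ∧
      (∀ p q p' q' : ℕ, f ((p:ℤ) - p', (q:ℤ) - q') = 0 →
        (c:ℤ) ∣ (a:ℤ) ^ p * (b:ℤ) ^ q' - (a:ℤ) ^ p' * (b:ℤ) ^ q) ∧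
      (∀ p q p' q' : ℕ, f ((p:ℤ) - p', (q:ℤ) - q') = e →
        (c:ℤ) ∣ (a:ℤ) ^ p * (b:ℤ) ^ q' + (a:ℤ) ^ p' * (b:ℤ) ^ q) := by
  set ua := ZMod.unitOfCoprime a hac with hua
  set ub := ZMod.unitOfCoprime b hbc with hub
  have va : (ua : ZMod c) = a := ZMod.coe_unitOfCoprime a hac
  have vb : (ub : ZMod c) = b := ZMod.coe_unitOfCoprime b hbc
  let f : ℤ × ℤ →+ Additive (ZMod c)ˣ :=
    { toFun := fun v => Additive.ofMul (ua ^ v.1 * ub ^ (-v.2))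
      map_zero' := by simp
      map_add' := by
        intro v w
        rw [← ofMul_mul]
        congr 1
        simp only [Prod.fst_add, Prod.snd_add, neg_add, zpow_add]
        exact mul_mul_mul_comm _ _ _ _ }
  have hf : ∀ x y : ℤ, f (x, y) = Additive.ofMul (ua ^ x * ub ^ (-y)) := fun x y => rfl
  have gen : ∀ (p q p' q' : ℕ) (ε : (ZMod c)ˣ), f ((p:ℤ) - p', (q:ℤ) - q') = Additive.ofMul ε →
      (a : ZMod c) ^ p * (b : ZMod c) ^ q' = ε * ((a : ZMod c) ^ p' * (b : ZMod c) ^ q) := by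
    intro p q p' q' ε h
    rw [hf] at h
    have h := Additive.ofMul.injective h
    have h2 : ua ^ p * ub ^ q' = ε * (ua ^ p' * ub ^ q) := by
      rw [← h]
      simp only [neg_sub, zpow_sub, zpow_natCast]
      generalize ua ^ p = A
      generalize ub ^ q = B
      generalize ua ^ p' = C
      generalize ub ^ q' = D
      calc A * D = A * D * (C⁻¹ * C) * (B⁻¹ * B) := by simp
        _ = _ := by ac_rfl
    have h3 := congrArg (fun u : (ZMod c)ˣ => (u : ZMod c)) h2
    simpa [va, vb] using h3
  refine ⟨f, Additive.ofMul (-1), ?_, ?_, ?_, ?_, ?_⟩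
  · intro h
    have h : (-1 : (ZMod c)ˣ) = 1 := Additive.ofMul.injective h
    have h2 := congrArg (fun u : (ZMod c)ˣ => (u : ZMod c)) h
    have : Fact (2 < c) := ⟨hc⟩
    simp at h2
    exact ZMod.neg_one_ne_one h2
  · rw [← ofMul_mul]; simp
  · intro x y z hz h
    rw [hf]
    congr 1
    have h1 : (a : ZMod c) ^ x + (b : ZMod c) ^ y = 0 := by
      have := congrArg (fun n : ℕ => (n : ZMod c)) h
      simpa [hz.ne'] using this
    have h2 : ua ^ x = -1 * ub ^ y := by
      ext
      simp [va, vb]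
      exact eq_neg_of_add_eq_zero_left h1
    rw [zpow_natCast, zpow_neg, zpow_natCast, h2, mul_assoc, mul_inv_cancel, mul_one]
  · intro p q p' q' h
    have := gen p q p' q' 1 h
    rw [← ZMod.intCast_zmod_eq_zero_iff_dvd]
    push_cast
    rw [this]; simp
  · intro p q p' q' h
    have := gen p q p' q' (-1) h
    rw [← ZMod.intCast_zmod_eq_zero_iff_dvd]
    push_cast
    rw [this]; simp

lemma sol_ext {a b c : ℕ} (hc1 : 1 < c) {s t : ℕ × ℕ × ℕ}
    (hs : a ^ s.1 + b ^ s.2.1 = c ^ s.2.2) (ht : a ^ t.1 + b ^ t.2.1 = c ^ t.2.2)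
    (h : s.1 = t.1 ∧ s.2.1 = t.2.1) : s = t := by
  obtain ⟨x, y, z⟩ := s
  obtain ⟨x', y', z'⟩ := t
  simp only at *
  obtain ⟨rfl, rfl⟩ := h
  rw [hs] at ht
  rw [Nat.pow_right_injective hc1 ht]

/-- `s` is a solution. -/
def Sol (a b c : ℕ) (s : ℕ × ℕ × ℕ) : Prop :=
  0 < s.1 ∧ 0 < s.2.1 ∧ 0 < s.2.2 ∧ a ^ s.1 + b ^ s.2.1 = c ^ s.2.2

lemma exc_pair {s t : ℕ × ℕ × ℕ} (hs : Sol 10 3 13 s) (ht : Sol 10 3 13 t) :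
    s = t ∨ (s.1 = 1 ∧ s.2.1 = 7) ∨ (t.1 = 1 ∧ t.2.1 = 7) := by
  obtain ⟨hx, hy, hz, h⟩ := hs
  obtain ⟨hx', hy', hz', h'⟩ := ht
  have p1 := exc_par hx hz h
  have p2 := exc_par hx' hz' h'
  have hp : Prime (13 : ℤ) := by norm_num
  have d1 : (13:ℤ) ∣ 10 ^ s.1 + 3 ^ s.2.1 := by
    have : (10:ℤ) ^ s.1 + 3 ^ s.2.1 = 13 ^ s.2.2 := by exact_mod_cast h
    rw [this]; exact dvd_pow_self _ hz.ne'
  have d2 : (13:ℤ) ∣ 10 ^ t.1 + 3 ^ t.2.1 := by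
    have : (10:ℤ) ^ t.1 + 3 ^ t.2.1 = 13 ^ t.2.2 := by exact_mod_cast h'
    rw [this]; exact dvd_pow_self _ hz'.ne'
  have ex : s.1 = 2 * (s.1 / 2) + 1 := by omega
  have ey : s.2.1 = 2 * (s.2.1 / 2) + 1 := by omega
  have ex' : t.1 = 2 * (t.1 / 2) + 1 := by omega
  have ey' : t.2.1 = 2 * (t.2.1 / 2) + 1 := by omega
  have hd := KEY (a := 10) (b := 3) (c := 13) (by norm_num) (by norm_num) (by norm_num) (by norm_num)
    (by norm_num) (by norm_num) (by decide) hx hy hz h hx' hy' hz' h' (by omega) (by omega) (by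
      rw [ex, ey] at d1
      rw [ex', ey'] at d2
      generalize s.1 / 2 = p at *
      generalize s.2.1 / 2 = q at *
      generalize t.1 / 2 = p' at *
      generalize t.2.1 / 2 = q' at *
      push_cast
      apply hp.dvd_or_dvd
      have h1 := (d1.mul_right ((3:ℤ) ^ (2 * q' + 1))).sub (d2.mul_right ((3:ℤ) ^ (2 * q + 1)))
      have h3 : (13:ℤ) ∣ 30 * (((10:ℤ) ^ p * 3 ^ q' - 10 ^ p' * 3 ^ q) *
          ((10:ℤ) ^ p * 3 ^ q' + 10 ^ p' * 3 ^ q)) := by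
        have h5 : 30 * (((10:ℤ) ^ p * 3 ^ q' - 10 ^ p' * 3 ^ q) *
            ((10:ℤ) ^ p * 3 ^ q' + 10 ^ p' * 3 ^ q)) =
            (10 ^ (2 * p + 1) + 3 ^ (2 * q + 1)) * 3 ^ (2 * q' + 1) -
            (10 ^ (2 * p' + 1) + 3 ^ (2 * q' + 1)) * 3 ^ (2 * q + 1) := by
          simp only [pow_succ, pow_mul']
          ring
        rw [h5]; exact h1
      rcases hp.dvd_or_dvd h3 with h4 | h4
      · norm_num at h4
      · exact h4)
  rcases hd with hd | hd | hd
  · exact Or.inl (sol_ext (by norm_num) h h' hd)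
  · right; left; unfold Exc at hd; omega
  · right; right; unfold Exc at hd; omega

lemma exc_main {s t u : ℕ × ℕ × ℕ} (hs : Sol 10 3 13 s) (ht : Sol 10 3 13 t)
    (hu : Sol 10 3 13 u) : s = t ∨ s = u ∨ t = u := by
  have hc : (1:ℕ) < 13 := by norm_num
  rcases exc_pair hs ht with h | h | h
  · exact Or.inl h
  · rcases exc_pair ht hu with h' | h' | h'
    · exact Or.inr (Or.inr h')
    · exact Or.inl (sol_ext hc hs.2.2.2 ht.2.2.2 (by omega))
    · exact Or.inr (Or.inl (sol_ext hc hs.2.2.2 hu.2.2.2 (by omega)))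
  · rcases exc_pair hs hu with h' | h' | h'
    · exact Or.inr (Or.inl h')
    · exact Or.inl (sol_ext hc hs.2.2.2 ht.2.2.2 (by omega))
    · exact Or.inr (Or.inr (sol_ext hc ht.2.2.2 hu.2.2.2 (by omega)))

lemma exc_all {a b c x y : ℕ} (he : Exc a b c x y) {s t u : ℕ × ℕ × ℕ} (hs : Sol a b c s)
    (ht : Sol a b c t) (hu : Sol a b c u) : s = t ∨ s = u ∨ t = u := by
  rcases he with ⟨rfl, rfl, rfl, -, -⟩ | ⟨rfl, rfl, rfl, -, -⟩
  · exact exc_main hs ht hu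
  · have sw : ∀ s : ℕ × ℕ × ℕ, Sol 3 10 13 s → Sol 10 3 13 (s.2.1, s.1, s.2.2) := by
      rintro s ⟨h1, h2, h3, h4⟩
      exact ⟨h2, h1, h3, by rw [← h4, add_comm]⟩
    have := exc_main (sw s hs) (sw t ht) (sw u hu)
    simpa [Prod.ext_iff, and_left_comm] using this

lemma main_pair {a b c : ℕ} (hab : Nat.Coprime a b) (hac : Nat.Coprime a c)
    (hbc : Nat.Coprime b c) (ha1 : 1 < a) (hb1 : 1 < b) (hc1 : 1 < c) (hcodd : Odd c)
    {A : Type*} [AddCommGroup A] (f : ℤ × ℤ →+ A) (e : A)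
    (hf0 : ∀ p q p' q' : ℕ, f ((p:ℤ) - p', (q:ℤ) - q') = 0 →
        (c:ℤ) ∣ (a:ℤ) ^ p * (b:ℤ) ^ q' - (a:ℤ) ^ p' * (b:ℤ) ^ q)
    (hfe : ∀ p q p' q' : ℕ, f ((p:ℤ) - p', (q:ℤ) - q') = e →
        (c:ℤ) ∣ (a:ℤ) ^ p * (b:ℤ) ^ q' + (a:ℤ) ^ p' * (b:ℤ) ^ q)
    {s t : ℕ × ℕ × ℕ} (hs : Sol a b c s) (ht : Sol a b c t) (u : ℤ × ℤ)
    (hu1 : (s.1 : ℤ) = t.1 + u.1 + u.1) (hu2 : (s.2.1 : ℤ) = t.2.1 + u.2 + u.2)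
    (h : f u = 0 ∨ f u = e) : s = t ∨ ∃ x y, Exc a b c x y := by
  have hu : u = (((s.1 / 2 : ℕ) : ℤ) - (t.1 / 2 : ℕ), ((s.2.1 / 2 : ℕ) : ℤ) - (t.2.1 / 2 : ℕ)) := by
    ext
    · simp only; omega
    · simp only; omega
  rw [hu] at h
  rcases KEY hab hac hbc ha1 hb1 hc1 hcodd hs.1 hs.2.1 hs.2.2.1 hs.2.2.2 ht.1 ht.2.1 ht.2.2.1
    ht.2.2.2 (by omega) (by omega) (h.imp (hf0 _ _ _ _) (hfe _ _ _ _)) with h | h | h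
  · exact Or.inl (sol_ext hc1 hs.2.2.2 ht.2.2.2 h)
  · exact Or.inr ⟨_, _, h⟩
  · exact Or.inr ⟨_, _, h⟩

lemma main_case2 {a b c : ℕ} (hab : Nat.Coprime a b) (hac : Nat.Coprime a c)
    (hbc : Nat.Coprime b c) (ha1 : 1 < a) (hb1 : 1 < b) (hc1 : 1 < c) (hcodd : Odd c)
    {s₁ s₂ s₃ : ℕ × ℕ × ℕ} (h₁ : Sol a b c s₁) (h₂ : Sol a b c s₂) (h₃ : Sol a b c s₃)
    (hx : s₁.1 % 2 = s₂.1 % 2) (hy : s₁.2.1 % 2 = s₂.2.1 % 2) :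
    s₁ = s₂ ∨ s₁ = s₃ ∨ s₂ = s₃ := by
  obtain ⟨f, e, he, he2, hsol, hf0, hfe⟩ := chi_exists hac hbc (by
    obtain ⟨k, hk⟩ := hcodd; omega)
  by_cases hE : ∃ x y, Exc a b c x y
  · obtain ⟨x, y, hE⟩ := hE
    exact exc_all hE h₁ h₂ h₃
  have pair := @main_pair a b c hab hac hbc ha1 hb1 hc1 hcodd _ _ f e hf0 hfe
  let u : ℤ × ℤ := (((s₁.1 : ℤ) - s₂.1) / 2, ((s₁.2.1 : ℤ) - s₂.2.1) / 2)
  have hu1 : (s₁.1 : ℤ) = s₂.1 + u.1 + u.1 := by simp only [u]; omega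
  have hu2 : (s₁.2.1 : ℤ) = s₂.2.1 + u.2 + u.2 := by simp only [u]; omega
  by_cases hu : f u = 0 ∨ f u = e
  · exact Or.inl ((pair h₁ h₂ u hu1 hu2 hu).resolve_right hE)
  push Not at hu
  have hp := h₁.1
  obtain ⟨t, ht, hft⟩ := abs_case2 f he he2 ((s₁.1 : ℤ), (s₁.2.1 : ℤ)) ((s₂.1 : ℤ), (s₂.2.1 : ℤ))
    ((s₃.1 : ℤ), (s₃.2.1 : ℤ)) u (hsol _ _ _ h₁.2.2.1 h₁.2.2.2) (hsol _ _ _ h₂.2.2.1 h₂.2.2.2)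
    (hsol _ _ _ h₃.2.2.1 h₃.2.2.2) (by simp only; omega) (Prod.ext hu1 hu2) hu.1 hu.2
  have ht1 := congrArg Prod.fst ht
  have ht2 := congrArg Prod.snd ht
  simp only [Prod.fst_add, Prod.snd_add] at ht1 ht2
  rw [← or_assoc] at hft
  rcases hft with hft | hft
  · exact Or.inr (Or.inl ((pair h₃ h₁ t ht1 ht2 hft).resolve_right hE).symm)
  · exact Or.inr (Or.inr ((pair h₃ h₂ (t + u) (by simp only [Prod.fst_add]; omega)
      (by simp only [Prod.snd_add]; omega) hft).resolve_right hE).symm)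

/-- Lemma 2.8: for coprime `a, b, c > 1` with `c` odd, the equation
`a^x + b^y = c^z` has at most two solutions in positive integers. -/
theorem stmt_13 (a b c : ℕ) (hab : Nat.Coprime a b) (hac : Nat.Coprime a c)
    (hbc : Nat.Coprime b c) (ha1 : 1 < a) (hb1 : 1 < b) (hc1 : 1 < c)
    (hcodd : Odd c)
    (s₁ s₂ s₃ : ℕ × ℕ × ℕ)
    (h₁ : 0 < s₁.1 ∧ 0 < s₁.2.1 ∧ 0 < s₁.2.2 ∧ a ^ s₁.1 + b ^ s₁.2.1 = c ^ s₁.2.2)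
    (h₂ : 0 < s₂.1 ∧ 0 < s₂.2.1 ∧ 0 < s₂.2.2 ∧ a ^ s₂.1 + b ^ s₂.2.1 = c ^ s₂.2.2)
    (h₃ : 0 < s₃.1 ∧ 0 < s₃.2.1 ∧ 0 < s₃.2.2 ∧ a ^ s₃.1 + b ^ s₃.2.1 = c ^ s₃.2.2) :
    s₁ = s₂ ∨ s₁ = s₃ ∨ s₂ = s₃ := by
  by_cases c12 : s₁.1 % 2 = s₂.1 % 2 ∧ s₁.2.1 % 2 = s₂.2.1 % 2
  · exact main_case2 hab hac hbc ha1 hb1 hc1 hcodd h₁ h₂ h₃ c12.1 c12.2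
  by_cases c13 : s₁.1 % 2 = s₃.1 % 2 ∧ s₁.2.1 % 2 = s₃.2.1 % 2
  · rcases main_case2 hab hac hbc ha1 hb1 hc1 hcodd h₁ h₃ h₂ c13.1 c13.2 with h | h | h
    · exact Or.inr (Or.inl h)
    · exact Or.inl h
    · exact Or.inr (Or.inr h.symm)
  by_cases c23 : s₂.1 % 2 = s₃.1 % 2 ∧ s₂.2.1 % 2 = s₃.2.1 % 2
  · rcases main_case2 hab hac hbc ha1 hb1 hc1 hcodd h₂ h₃ h₁ c23.1 c23.2 with h | h | h
    · exact Or.inr (Or.inr h)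
    · exact Or.inl h.symm
    · exact Or.inr (Or.inl h.symm)
  exfalso
  obtain ⟨f, e, he, he2, hsol, -, -⟩ := chi_exists hac hbc (by
    obtain ⟨k, hk⟩ := hcodd; omega)
  refine abs_case1 f he he2 ((s₁.1 : ℤ), (s₁.2.1 : ℤ)) ((s₂.1 : ℤ), (s₂.2.1 : ℤ))
    ((s₃.1 : ℤ), (s₃.2.1 : ℤ)) (hsol _ _ _ h₁.2.2.1 h₁.2.2.2) (hsol _ _ _ h₂.2.2.1 h₂.2.2.2)
    (hsol _ _ _ h₃.2.2.1 h₃.2.2.2) ?_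
  simp only [Int.odd_sub, Int.even_sub, Int.odd_mul, Int.even_mul, Int.even_coe_nat, Int.odd_coe_nat,
    Nat.even_iff, Nat.odd_iff]
  rcases Nat.mod_two_eq_zero_or_one s₁.1 with h1 | h1 <;>
  rcases Nat.mod_two_eq_zero_or_one s₂.1 with h2 | h2 <;>
  rcases Nat.mod_two_eq_zero_or_one s₃.1 with h3 | h3 <;>
  rcases Nat.mod_two_eq_zero_or_one s₁.2.1 with h4 | h4 <;>
  rcases Nat.mod_two_eq_zero_or_one s₂.2.1 with h5 | h5 <;>
  rcases Nat.mod_two_eq_zero_or_one s₃.2.1 with h6 | h6 <;>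
  simp_all
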